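/- There exist constants C_l, C_u > 0, depending only on k, ℓ and L₀, such that for every quasi shell solution y and every r ∈ [R₀, 2R₀] with γ(r) ≥ 0 one has C_l γ(r)^{k+ℓ+3/2}/r⁴ ≤ ϱ(r) ≤ C_u γ(r)^{k+ℓ+3/2}/r⁴. -/

import Mathlib

open MeasureTheory Real Set Filter

/-- The constant `c_ℓ = 2π ∫₀¹ s^ℓ (1-s)^{-1/2} ds`. -/
noncomputable def cConst (ℓ : ℝ) : ℝ :=
  2 * π * ∫ s in Set.Ioc (0 : ℝ) 1, s ^ ℓ / Real.sqrt (1 - s)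

/-- Energy density of the massless Einstein--Vlasov ansatz. -/
noncomputable def rho (k ℓ L0 : ℝ) (y : ℝ → ℝ) (r : ℝ) : ℝ :=
  cConst ℓ * r ^ (2 * ℓ) *
    ∫ ε in Set.Ioc (Real.sqrt L0 / r) (Real.exp (y r)),
      (1 - ε * Real.exp (-(y r))) ^ k * ε ^ 2 * (ε ^ 2 - L0 / r ^ 2) ^ (ℓ + 1 / 2)

/-- Radial pressure of the massless Einstein--Vlasov ansatz. -/
noncomputable def pres (k ℓ L0 : ℝ) (y : ℝ → ℝ) (r : ℝ) : ℝ :=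
  (cConst ℓ / (2 * ℓ + 3)) * r ^ (2 * ℓ) *
    ∫ ε in Set.Ioc (Real.sqrt L0 / r) (Real.exp (y r)),
      (1 - ε * Real.exp (-(y r))) ^ k * (ε ^ 2 - L0 / r ^ 2) ^ (ℓ + 3 / 2)

/-- The Hawking mass `m(r) = 4π ∫₀ʳ s² ϱ(s) ds`. -/
noncomputable def hawkingMass (k ℓ L0 : ℝ) (y : ℝ → ℝ) (r : ℝ) : ℝ :=
  4 * π * ∫ s in Set.Ioc (0 : ℝ) r, s ^ 2 * rho k ℓ L0 y s

/-- The characteristic function `γ(r) = y(r) - (1/2) ln (L₀ / r²)`. -/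
noncomputable def charFn (L0 : ℝ) (y : ℝ → ℝ) (r : ℝ) : ℝ :=
  y r - (1 / 2) * Real.log (L0 / r ^ 2)

/-- The inner radius `R₀ = √L₀ e^{-y(0)}`. -/
noncomputable def innerRadius (L0 : ℝ) (y : ℝ → ℝ) : ℝ :=
  Real.sqrt L0 * Real.exp (-(y 0))

/-- A quasi shell solution of the massless Einstein--Vlasov system. -/
def QuasiShell (k ℓ L0 : ℝ) (y : ℝ → ℝ) : Prop :=
  ContDiffOn ℝ 1 y (Set.Ici 0) ∧
  ∀ r > 0, 2 * hawkingMass k ℓ L0 y r / r < 1 ∧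
    HasDerivAt y
      (-(1 - 2 * hawkingMass k ℓ L0 y r / r)⁻¹ *
        (4 * π * r * pres k ℓ L0 y r + hawkingMass k ℓ L0 y r / r ^ 2)) r

/-!
With `a = √L₀ / r` the energy integral runs over `[a, a eᵞ]`. Writing `x = eᵞ - 1`, the substitution
`ε = a (1 + x s)` splits off `a^(2ℓ+4)` and `x^(k+ℓ+3/2)`, so that `r⁴ ϱ(r)` is a function of `γ(r)`
alone: up to a constant it is `x^(k+ℓ+3/2)` times a beta-type integral over `[0, 1]`, whose smooth
weight is bounded above and below by positive constants as long as `γ` stays bounded. On bounded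
sets `eᵞ - 1` is comparable to `γ`. For a quasi shell, `y` is decreasing because `p` and `m` are
nonnegative, hence `eᵞ ≤ r / R₀ ≤ 2`.
-/

lemma exists_pos_bounds_of_isCompact {β : Type*} [TopologicalSpace β] {K : Set β} {f : β → ℝ}
    (hK : IsCompact K) (hf : ContinuousOn f K) (hpos : ∀ x ∈ K, 0 < f x) :
    ∃ c C : ℝ, 0 < c ∧ 0 < C ∧ ∀ x ∈ K, c ≤ f x ∧ f x ≤ C := by
  obtain ⟨c, hc, hcf⟩ := hK.exists_forall_le' hf hpos
  obtain ⟨d, hd, hdf⟩ := hK.exists_forall_le' (hf.inv₀ fun x hx => (hpos x hx).ne')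
    fun x hx => inv_pos.2 (hpos x hx)
  exact ⟨c, d⁻¹, hc, inv_pos.2 hd, fun x hx =>
    ⟨hcf x hx, (le_inv_comm₀ hd (hpos x hx)).1 (hdf x hx)⟩⟩

lemma intervalIntegrable_rpow_mul_one_sub_rpow {α β : ℝ} (hα : -1 < α) (hβ : -1 < β) :
    IntervalIntegrable (fun s : ℝ => s ^ α * (1 - s) ^ β) volume 0 1 := by
  have hconv := Complex.betaIntegral_convergent (u := ((α + 1 : ℝ) : ℂ)) (v := ((β + 1 : ℝ) : ℂ))
    (by rw [Complex.ofReal_re]; linarith) (by rw [Complex.ofReal_re]; linarith)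
  refine hconv.norm.congr fun s hs => ?_
  rw [uIoc_of_le zero_le_one] at hs
  have hs₁ : 0 ≤ 1 - s := sub_nonneg.2 hs.2
  have hreal : (s : ℂ) ^ (((α + 1 : ℝ) : ℂ) - 1) * (1 - (s : ℂ)) ^ (((β + 1 : ℝ) : ℂ) - 1) =
      ((s ^ α * (1 - s) ^ β : ℝ) : ℂ) := by
    rw [Complex.ofReal_mul, Complex.ofReal_cpow hs.1.le, Complex.ofReal_cpow hs₁]
    push_cast
    simp only [add_sub_cancel_right]
  have hnonneg : 0 ≤ s ^ α * (1 - s) ^ β :=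
    mul_nonneg (rpow_nonneg hs.1.le _) (rpow_nonneg hs₁ _)
  simp only [hreal, Complex.norm_of_nonneg hnonneg]

lemma integral_rpow_mul_one_sub_rpow_pos {α β : ℝ} (hα : -1 < α) (hβ : -1 < β) :
    0 < ∫ s in (0 : ℝ)..1, s ^ α * (1 - s) ^ β :=
  intervalIntegral.intervalIntegral_pos_of_pos_on
    (intervalIntegrable_rpow_mul_one_sub_rpow hα hβ)
    (fun _ hs => mul_pos (rpow_pos_of_pos hs.1 _) (rpow_pos_of_pos (sub_pos.2 hs.2) _)) zero_lt_one

/-- The smooth factor `(1 + x)⁻ᵏ (1 + x s)² (2 + x s)ⁿ` that remains of the energy integrand on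
`[a, a (1 + x)]` after the substitution `ε = a (1 + x s)`, once the powers of `a` and `x` and the
singular kernel `sⁿ (1 - s)ᵏ` are split off. -/
noncomputable def energyWeight (k n x s : ℝ) : ℝ :=
  (1 + x) ^ (-k) * (1 + x * s) ^ 2 * (2 + x * s) ^ n

/-- The energy integral over `[a, a (1 + x)]` with the powers of `a` and `x` split off:
`∫₀¹ sⁿ (1 - s)ᵏ w(x, s) ds`, where `w` is `energyWeight`. -/
noncomputable def reducedEnergy (k n x : ℝ) : ℝ :=
  ∫ s in (0 : ℝ)..1, s ^ n * (1 - s) ^ k * energyWeight k n x s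

lemma continuousOn_energyWeight (k n : ℝ) :
    ContinuousOn (fun z : ℝ × ℝ => energyWeight k n z.1 z.2) (Ici 0 ×ˢ Ici 0) := by
  refine ((ContinuousOn.rpow_const (by fun_prop) fun z hz => Or.inl ?_).mul (by fun_prop)).mul
    (ContinuousOn.rpow_const (by fun_prop) fun z hz => Or.inl ?_)
  · have : 0 ≤ z.1 := hz.1
    positivity
  · have : 0 ≤ z.1 * z.2 := mul_nonneg hz.1 hz.2
    positivity

lemma energyWeight_pos (k n : ℝ) {x s : ℝ} (hx : 0 ≤ x) (hs : 0 ≤ s) :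
    0 < energyWeight k n x s := by
  unfold energyWeight
  positivity

lemma exists_reducedEnergy_bounds {k n : ℝ} (hk : -1 < k) (hn : -1 < n) (X : ℝ) :
    ∃ c C : ℝ, 0 < c ∧ 0 < C ∧
      ∀ x ∈ Icc 0 X, c ≤ reducedEnergy k n x ∧ reducedEnergy k n x ≤ C := by
  have hsub : Icc (0 : ℝ) X ×ˢ Icc (0 : ℝ) 1 ⊆ Ici 0 ×ˢ Ici 0 :=
    prod_mono Icc_subset_Ici_self Icc_subset_Ici_self
  obtain ⟨c, C, hc, hC, hw⟩ := exists_pos_bounds_of_isCompact (isCompact_Icc.prod isCompact_Icc)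
    ((continuousOn_energyWeight k n).mono hsub)
    fun z hz => energyWeight_pos k n (hsub hz).1 (hsub hz).2
  have hker := intervalIntegrable_rpow_mul_one_sub_rpow hn hk
  have hker_pos := integral_rpow_mul_one_sub_rpow_pos hn hk
  have hker_nonneg : ∀ s ∈ Icc (0 : ℝ) 1, 0 ≤ s ^ n * (1 - s) ^ k := fun s hs =>
    mul_nonneg (rpow_nonneg hs.1 _) (rpow_nonneg (sub_nonneg.2 hs.2) _)
  refine ⟨_, _, mul_pos hker_pos hc, mul_pos hker_pos hC, fun x hx => ?_⟩
  have hint : IntervalIntegrable (fun s => s ^ n * (1 - s) ^ k * energyWeight k n x s)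
      volume 0 1 := by
    refine hker.mul_continuousOn ?_
    rw [uIcc_of_le zero_le_one]
    exact ((continuousOn_energyWeight k n).uncurry_left (f := energyWeight k n) x hx.1).mono
      Icc_subset_Ici_self
  rw [← intervalIntegral.integral_mul_const, ← intervalIntegral.integral_mul_const]
  exact ⟨intervalIntegral.integral_mono_on zero_le_one (hker.mul_const c) hint fun s hs =>
      mul_le_mul_of_nonneg_left (hw (x, s) ⟨hx, hs⟩).1 (hker_nonneg s hs),
    intervalIntegral.integral_mono_on zero_le_one hint (hker.mul_const C) fun s hs =>
      mul_le_mul_of_nonneg_left (hw (x, s) ⟨hx, hs⟩).2 (hker_nonneg s hs)⟩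

lemma energy_integrand_rescale (k n : ℝ) {a x s : ℝ} (ha : 0 < a) (hx : 0 < x)
    (hs : s ∈ Icc (0 : ℝ) 1) :
    a * x * ((1 - (a + a * x * s) / (a * (1 + x))) ^ k * (a + a * x * s) ^ 2 *
        ((a + a * x * s) ^ 2 - a ^ 2) ^ n) =
      a ^ (2 * n + 3) * x ^ (k + n + 1) * (s ^ n * (1 - s) ^ k * energyWeight k n x s) := by
  have hs₁ : 0 ≤ 1 - s := sub_nonneg.2 hs.2
  have hs₀ : 0 ≤ s := hs.1
  have hcutoff : 1 - (a + a * x * s) / (a * (1 + x)) = x * (1 - s) * (1 + x)⁻¹ := by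
    field_simp
    ring
  have hmom : (a + a * x * s) ^ 2 - a ^ 2 = a ^ 2 * (x * s * (2 + x * s)) := by ring
  have ha_pow : a ^ (2 * n + 3) = (a ^ 2) ^ n * a ^ 3 := by
    rw [← rpow_natCast_mul ha.le, ← rpow_natCast a 3, ← rpow_add ha]
    norm_num
  have hx_pow : x ^ (k + n + 1) = x ^ k * x ^ n * x := by
    rw [rpow_add hx, rpow_add hx, rpow_one]
  rw [hcutoff, hmom, ha_pow, hx_pow, energyWeight, mul_rpow (by positivity) (by positivity),
    mul_rpow hx.le hs₁, mul_rpow (by positivity) (by positivity),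
    mul_rpow (by positivity) (by positivity), mul_rpow hx.le hs₀, inv_rpow (by positivity),
    ← rpow_neg (by positivity)]
  ring

lemma energyIntegral_eq {k n a x : ℝ} (hq : k + n + 1 ≠ 0) (ha : 0 < a) (hx : 0 ≤ x) :
    ∫ ε in Ioc a (a * (1 + x)), (1 - ε / (a * (1 + x))) ^ k * ε ^ 2 * (ε ^ 2 - a ^ 2) ^ n =
      a ^ (2 * n + 3) * x ^ (k + n + 1) * reducedEnergy k n x := by
  rcases hx.eq_or_lt with rfl | hx
  · simp [zero_rpow hq]
  have hab : a ≤ a * (1 + x) := by nlinarith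
  have hsubst := intervalIntegral.mul_integral_comp_add_mul (a := 0) (b := 1)
    (f := fun ε : ℝ => (1 - ε / (a * (1 + x))) ^ k * ε ^ 2 * (ε ^ 2 - a ^ 2) ^ n) (a * x) a
  rw [mul_zero, add_zero, mul_one, show a + a * x = a * (1 + x) by ring] at hsubst
  rw [← intervalIntegral.integral_of_le hab, ← hsubst, reducedEnergy,
    ← intervalIntegral.integral_const_mul, ← intervalIntegral.integral_const_mul]
  refine intervalIntegral.integral_congr fun s hs => energy_integrand_rescale k n ha hx ?_
  rwa [uIcc_of_le zero_le_one] at hs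

lemma cConst_nonneg (ℓ : ℝ) : 0 ≤ cConst ℓ :=
  mul_nonneg two_pi_pos.le <| setIntegral_nonneg measurableSet_Ioc fun _ hs =>
    div_nonneg (rpow_nonneg hs.1.le _) (sqrt_nonneg _)

lemma cConst_pos {ℓ : ℝ} (hℓ : -1 < ℓ) : 0 < cConst ℓ := by
  have hbeta : ∫ s in Ioc (0 : ℝ) 1, s ^ ℓ / √(1 - s) =
      ∫ s in (0 : ℝ)..1, s ^ ℓ * (1 - s) ^ (-(1 / 2) : ℝ) := by
    rw [intervalIntegral.integral_of_le zero_le_one]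
    refine setIntegral_congr_fun measurableSet_Ioc fun s hs => ?_
    simp only [rpow_neg (sub_nonneg.2 hs.2), sqrt_eq_rpow, div_eq_mul_inv]
  rw [cConst, hbeta]
  exact mul_pos two_pi_pos (integral_rpow_mul_one_sub_rpow_pos hℓ (by norm_num))

lemma sqrt_div_mul_exp_charFn {L0 r : ℝ} (y : ℝ → ℝ) (hL : 0 < L0) (hr : 0 < r) :
    √L0 / r * exp (charFn L0 y r) = exp (y r) := by
  have ha : 0 < √L0 / r := by positivity
  have hlog : 1 / 2 * log (L0 / r ^ 2) = log (√L0 / r) := by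
    rw [← sq_sqrt hL.le, ← div_pow, log_pow, sq_sqrt hL.le]
    push_cast
    ring
  rw [charFn, hlog, exp_sub, exp_log ha, mul_div_cancel₀ _ ha.ne']

lemma rpow_mul_sqrt_div_rpow {L0 r : ℝ} (ℓ : ℝ) (hL : 0 ≤ L0) (hr : 0 < r) :
    r ^ (2 * ℓ) * (√L0 / r) ^ (2 * ℓ + 4) = L0 ^ (ℓ + 2) / r ^ 4 := by
  have hr_pow : r ^ (2 * ℓ + 4) = r ^ (2 * ℓ) * r ^ 4 := by
    rw [rpow_add hr]
    norm_cast
  have hL_pow : √L0 ^ (2 * ℓ + 4) = L0 ^ (ℓ + 2) := by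
    rw [sqrt_eq_rpow, ← rpow_mul hL]
    ring_nf
  rw [div_rpow (sqrt_nonneg _) hr.le, hr_pow, hL_pow]
  field_simp

lemma rho_eq {k ℓ L0 r : ℝ} {y : ℝ → ℝ} (hq : k + ℓ + 3 / 2 ≠ 0) (hL : 0 < L0) (hr : 0 < r)
    (hγ : 0 ≤ charFn L0 y r) :
    rho k ℓ L0 y r = cConst ℓ * L0 ^ (ℓ + 2) * (exp (charFn L0 y r) - 1) ^ (k + ℓ + 3 / 2) *
      reducedEnergy k (ℓ + 1 / 2) (exp (charFn L0 y r) - 1) / r ^ 4 := by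
  have hq_eq : k + (ℓ + 1 / 2) + 1 = k + ℓ + 3 / 2 := by ring
  have hupper : √L0 / r * (1 + (exp (charFn L0 y r) - 1)) = exp (y r) := by
    rw [add_sub_cancel, sqrt_div_mul_exp_charFn y hL hr]
  have henergy := energyIntegral_eq (hq_eq ▸ hq) (show 0 < √L0 / r by positivity)
    (sub_nonneg.2 (one_le_exp hγ))
  simp only [hupper, div_eq_mul_inv _ (exp (y r)), ← exp_neg, hq_eq] at henergy
  rw [div_pow, sq_sqrt hL.le, show 2 * (ℓ + 1 / 2) + 3 = 2 * ℓ + 4 by ring] at henergy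
  rw [rho, henergy]
  linear_combination cConst ℓ * (exp (charFn L0 y r) - 1) ^ (k + ℓ + 3 / 2) *
    reducedEnergy k (ℓ + 1 / 2) (exp (charFn L0 y r) - 1) * rpow_mul_sqrt_div_rpow ℓ hL.le hr

lemma exp_sub_one_le_exp_mul {x X : ℝ} (hx : 0 ≤ x) (hX : x ≤ X) : exp x - 1 ≤ exp X * x := by
  have htangent : 1 - x ≤ exp (-x) := one_sub_le_exp_neg x
  calc exp x - 1 = exp x * (1 - exp (-x)) := by rw [mul_sub, ← exp_add]; simp
    _ ≤ exp x * x := by gcongr; linarith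
    _ ≤ exp X * x := by gcongr

theorem rho_bounds_general {k ℓ L0 : ℝ} (hk : -1 < k) (hℓ : -1 < ℓ) (hq : 0 < k + ℓ + 3 / 2)
    (hL : 0 < L0) (Γ : ℝ) :
    ∃ Cl Cu : ℝ, 0 < Cl ∧ 0 < Cu ∧
      ∀ (y : ℝ → ℝ) (r : ℝ), 0 < r → 0 ≤ charFn L0 y r → charFn L0 y r ≤ Γ →
        Cl * charFn L0 y r ^ (k + ℓ + 3 / 2) / r ^ 4 ≤ rho k ℓ L0 y r ∧
        rho k ℓ L0 y r ≤ Cu * charFn L0 y r ^ (k + ℓ + 3 / 2) / r ^ 4 := by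
  obtain ⟨c, C, hc, hC, hE⟩ :=
    exists_reducedEnergy_bounds hk (show -1 < ℓ + 1 / 2 by linarith) (exp Γ - 1)
  have hA : 0 < cConst ℓ * L0 ^ (ℓ + 2) := mul_pos (cConst_pos hℓ) (rpow_pos_of_pos hL _)
  refine ⟨cConst ℓ * L0 ^ (ℓ + 2) * c,
    cConst ℓ * L0 ^ (ℓ + 2) * exp Γ ^ (k + ℓ + 3 / 2) * C, by positivity, by positivity,
    fun y r hr hγ hΓ => ?_⟩
  rw [rho_eq hq.ne' hL hr hγ]
  set γ := charFn L0 y r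
  have hx : 0 ≤ exp γ - 1 := sub_nonneg.2 (one_le_exp hγ)
  obtain ⟨hcE, hEC⟩ := hE (exp γ - 1) ⟨hx, by gcongr⟩
  have hE_nonneg := hc.le.trans hcE
  have hlow : γ ^ (k + ℓ + 3 / 2) ≤ (exp γ - 1) ^ (k + ℓ + 3 / 2) :=
    rpow_le_rpow hγ (le_sub_iff_add_le.2 (add_one_le_exp γ)) hq.le
  have hupp : (exp γ - 1) ^ (k + ℓ + 3 / 2) ≤ exp Γ ^ (k + ℓ + 3 / 2) * γ ^ (k + ℓ + 3 / 2) := by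
    rw [← mul_rpow (exp_pos _).le hγ]
    exact rpow_le_rpow hx (exp_sub_one_le_exp_mul hγ hΓ) hq.le
  constructor
  · rw [mul_right_comm]
    gcongr
  · calc _ ≤ cConst ℓ * L0 ^ (ℓ + 2) * (exp Γ ^ (k + ℓ + 3 / 2) * γ ^ (k + ℓ + 3 / 2)) * C /
          r ^ 4 := by gcongr
      _ = _ := by ring

lemma energy_cutoff_nonneg {ε z : ℝ} (h : ε ≤ exp z) : 0 ≤ 1 - ε * exp (-z) := by
  rw [exp_neg, ← div_eq_mul_inv, sub_nonneg]
  exact (div_le_one (exp_pos z)).2 h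

lemma sq_sub_div_sq_nonneg {ε L0 r : ℝ} (hr : 0 < r) (h : √L0 / r < ε) :
    0 ≤ ε ^ 2 - L0 / r ^ 2 := by
  rw [sub_nonneg, div_le_iff₀ (by positivity), ← mul_pow]
  exact (lt_sq_of_sqrt_lt ((div_lt_iff₀ hr).1 h)).le

lemma rho_nonneg (k ℓ L0 : ℝ) (y : ℝ → ℝ) {r : ℝ} (hr : 0 < r) : 0 ≤ rho k ℓ L0 y r := by
  refine mul_nonneg (mul_nonneg (cConst_nonneg ℓ) (rpow_nonneg hr.le _))
    (setIntegral_nonneg measurableSet_Ioc fun ε hε => ?_)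
  have hcutoff := energy_cutoff_nonneg hε.2
  have hmom := sq_sub_div_sq_nonneg hr hε.1
  positivity

lemma pres_nonneg (k L0 : ℝ) {ℓ : ℝ} (hℓ : -(3 / 2) ≤ ℓ) (y : ℝ → ℝ) {r : ℝ} (hr : 0 < r) :
    0 ≤ pres k ℓ L0 y r := by
  refine mul_nonneg (mul_nonneg (div_nonneg (cConst_nonneg ℓ) (by linarith))
    (rpow_nonneg hr.le _)) (setIntegral_nonneg measurableSet_Ioc fun ε hε => ?_)
  have hcutoff := energy_cutoff_nonneg hε.2
  have hmom := sq_sub_div_sq_nonneg hr hε.1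
  positivity

lemma hawkingMass_nonneg (k ℓ L0 : ℝ) (y : ℝ → ℝ) (r : ℝ) : 0 ≤ hawkingMass k ℓ L0 y r :=
  mul_nonneg (by positivity) <| setIntegral_nonneg measurableSet_Ioc fun s hs =>
    mul_nonneg (sq_nonneg s) (rho_nonneg k ℓ L0 y hs.1)

lemma QuasiShell.antitoneOn {k ℓ L0 : ℝ} {y : ℝ → ℝ} (hℓ : -(3 / 2) ≤ ℓ)
    (hy : QuasiShell k ℓ L0 y) : AntitoneOn y (Ici 0) := by
  refine antitoneOn_of_hasDerivWithinAt_nonpos (convex_Ici 0) hy.1.continuousOn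
    (fun r hr => (hy.2 r (by rwa [interior_Ici] at hr)).2.hasDerivWithinAt) fun r hr => ?_
  rw [interior_Ici] at hr
  have hr₀ : 0 < r := hr
  have hdenom : 0 ≤ 1 - 2 * hawkingMass k ℓ L0 y r / r := sub_nonneg.2 (hy.2 r hr).1.le
  have hpres := pres_nonneg k L0 hℓ y hr
  have hmass := hawkingMass_nonneg k ℓ L0 y r
  exact mul_nonpos_of_nonpos_of_nonneg (neg_nonpos.2 (inv_nonneg.2 hdenom)) (by positivity)

lemma innerRadius_pos {L0 : ℝ} (y : ℝ → ℝ) (hL : 0 < L0) : 0 < innerRadius L0 y :=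
  mul_pos (sqrt_pos.2 hL) (exp_pos _)

lemma QuasiShell.charFn_le_log {k ℓ L0 c r : ℝ} {y : ℝ → ℝ} (hℓ : -(3 / 2) ≤ ℓ) (hL : 0 < L0)
    (hy : QuasiShell k ℓ L0 y) (hr : 0 < r) (hrc : r ≤ c * innerRadius L0 y) :
    charFn L0 y r ≤ log c := by
  have hyr : y r ≤ y 0 := hy.antitoneOn hℓ self_mem_Ici hr.le hr.le
  have hR := innerRadius_pos y hL
  have hc : 0 < c := pos_of_mul_pos_left (hr.trans_le hrc) hR.le
  rw [le_log_iff_exp_le hc]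
  calc exp (charFn L0 y r) = exp (y r) * (r / √L0) := by
        rw [← sqrt_div_mul_exp_charFn y hL hr]
        field_simp
    _ ≤ exp (y 0) * (r / √L0) := by gcongr
    _ = r / innerRadius L0 y := by
        rw [innerRadius, exp_neg]
        field_simp
    _ ≤ c := (div_le_iff₀ hR).2 hrc

/-- Two-sided bounds `C_l γ^{k+ℓ+3/2}/r⁴ ≤ ϱ ≤ C_u γ^{k+ℓ+3/2}/r⁴`
on `[R₀, 2R₀]` where `γ ≥ 0`, with constants depending only on `k, ℓ, L₀`. -/
theorem rho_bounds (k ℓ L0 : ℝ) (hk : 0 ≤ k) (hl : -(1 / 2) ≤ ℓ) (hL : 0 < L0) :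
    ∃ Cl Cu : ℝ, 0 < Cl ∧ 0 < Cu ∧
      ∀ y : ℝ → ℝ, QuasiShell k ℓ L0 y →
        ∀ r, innerRadius L0 y ≤ r → r ≤ 2 * innerRadius L0 y →
          0 ≤ charFn L0 y r →
          Cl * charFn L0 y r ^ (k + ℓ + 3 / 2) / r ^ 4 ≤ rho k ℓ L0 y r ∧
          rho k ℓ L0 y r ≤ Cu * charFn L0 y r ^ (k + ℓ + 3 / 2) / r ^ 4 := by
  obtain ⟨Cl, Cu, hCl, hCu, hbounds⟩ := rho_bounds_general (k := k) (ℓ := ℓ)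
    (by linarith) (by linarith) (by linarith) hL (log 2)
  refine ⟨Cl, Cu, hCl, hCu, fun y hy r hRr hr2R hγ => ?_⟩
  have hr : 0 < r := (innerRadius_pos y hL).trans_le hRr
  exact hbounds y r hr hγ (hy.charFn_le_log (by linarith) hL hr hr2R)
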